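/- Asymptotics of the nonlinear potential: let 0 < c < 8/225, g(u) := (Real.log (Real.log (10 + u²)))^c, f(u) := u⁵·g(u), F(u) := ∫₀ᵘ f(v) dv. Then for every u ∈ ℝ one has (1/12)·u⁶·g(u) ≤ F(u) ≤ (1/6)·u⁶·g(u). -/

import Mathlib

open MeasureTheory Set

noncomputable section

abbrev Space : Type := EuclideanSpace ℝ (Fin 3)

/-- The loglog weight `g(u) = (log log (10 + u²))^c`. -/
def g (c u : ℝ) : ℝ := Real.log (Real.log (10 + u ^ 2)) ^ c

/-- The nonlinearity `f(u) = u⁵ g(u)`. -/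
def f (c u : ℝ) : ℝ := u ^ 5 * g c u

/-- The potential `F(u) = ∫₀ᵘ f(v) dv`. -/
def Fpot (c u : ℝ) : ℝ := ∫ v in (0:ℝ)..u, f c v

/-- First time derivative `∂ₜ u`. -/
def dt1 (u : ℝ → Space → ℝ) (t : ℝ) (x : Space) : ℝ := deriv (fun s => u s x) t

/-- Second time derivative `∂ₜₜ u`. -/
def dt2 (u : ℝ → Space → ℝ) (t : ℝ) (x : Space) : ℝ := deriv (fun s => dt1 u s x) t

/-- The spatial Laplacian. -/
def lap (h : Space → ℝ) (x : Space) : ℝ :=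
  ∑ i : Fin 3, fderiv ℝ (fun y => fderiv ℝ h y (EuclideanSpace.single i 1)) x
    (EuclideanSpace.single i 1)

/-- A classical solution of `∂ₜₜ u - Δ u = -f(u)` on the time interval `J`:
infinitely differentiable, compactly supported in space for each fixed time,
and satisfying the equation. -/
structure IsClassicalSol (c : ℝ) (J : Set ℝ) (u : ℝ → Space → ℝ) : Prop where
  smooth : ContDiffOn ℝ (⊤ : ℕ∞) (fun p : ℝ × Space => u p.1 p.2) (J ×ˢ (Set.univ : Set Space))
  compactSpt : ∀ t ∈ J, HasCompactSupport (u t)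
  eqn : ∀ t ∈ J, ∀ x : Space, dt2 u t x - lap (u t) x = - f c (u t x)

/-- The conserved energy. -/
def energy (c : ℝ) (u : ℝ → Space → ℝ) (t : ℝ) : ℝ :=
  (1/2) * (∫ x : Space, (dt1 u t x) ^ 2)
    + (1/2) * (∫ x : Space, ‖gradient (u t) x‖ ^ 2)
    + ∫ x : Space, Fpot c (u t x)

/-- Spatial `L^r` norm. -/
def LxNorm (r : ℝ) (h : Space → ℝ) : ℝ := (∫ x : Space, |h x| ^ r) ^ (1 / r)

/-- Mixed norm `L^q_t L^r_x (J × ℝ³)`. -/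
def LtLxNorm (q r : ℝ) (J : Set ℝ) (u : ℝ → Space → ℝ) : ℝ :=
  (∫ t in J, (LxNorm r (u t)) ^ q) ^ (1 / q)

/-- The homogeneous `H̃² = Ḣ² ∩ Ḣ¹` norm. -/
def H2tildeNorm (h : Space → ℝ) : ℝ :=
  (∫ x : Space, ‖iteratedFDeriv ℝ 2 h x‖ ^ 2) ^ ((1:ℝ)/2)
    + (∫ x : Space, ‖gradient h x‖ ^ 2) ^ ((1:ℝ)/2)

/-- The inhomogeneous `H¹` norm. -/
def H1Norm (h : Space → ℝ) : ℝ :=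
  (∫ x : Space, (h x) ^ 2) ^ ((1:ℝ)/2)
    + (∫ x : Space, ‖gradient h x‖ ^ 2) ^ ((1:ℝ)/2)

/-- Spatial `L^r` norm restricted to the interior of the light cone at time `t`,
i.e. the norm of `h · 1_{|x| < t}`. -/
def LxConeNorm (r t : ℝ) (h : Space → ℝ) : ℝ :=
  (∫ x in Metric.ball (0:Space) t, |h x| ^ r) ^ (1 / r)

/-- Mixed norm `L^q_t L^r_x (Γ₊(J))` on the truncated forward light cone. -/
def LtLxConeNorm (q r : ℝ) (J : Set ℝ) (u : ℝ → Space → ℝ) : ℝ :=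
  (∫ t in J, (LxConeNorm r t (u t)) ^ q) ^ (1 / q)

/-- The local energy `e(t)` (integral over the ball `|x| ≤ t`). -/
def locEnergy (c : ℝ) (u : ℝ → Space → ℝ) (t : ℝ) : ℝ :=
  (1/2) * (∫ x in Metric.closedBall (0:Space) t, (dt1 u t x) ^ 2)
    + (1/2) * (∫ x in Metric.closedBall (0:Space) t, ‖gradient (u t) x‖ ^ 2)
    + ∫ x in Metric.closedBall (0:Space) t, Fpot c (u t x)

lemma pa_two_lt (u : ℝ) : 2 < Real.log (10 + u ^ 2) := by
  rw [Real.lt_log_iff_exp_lt (by positivity)]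
  have h : Real.exp 2 = Real.exp 1 * Real.exp 1 := by rw [← Real.exp_add]; norm_num
  have := Real.exp_one_lt_d9
  have h0 := Real.exp_pos 1
  nlinarith [sq_nonneg u]

lemma pa_half_lt (u : ℝ) : 1 / 2 < Real.log (Real.log (10 + u ^ 2)) := by
  have h := pa_two_lt u
  have h1 := Real.log_two_gt_d9
  have h2 : Real.log 2 ≤ Real.log (Real.log (10 + u ^ 2)) :=
    Real.log_le_log (by norm_num) h.le
  linarith

lemma pa_deriv (c u : ℝ) : HasDerivAt (g c)
    (2 * u / (10 + u ^ 2) / Real.log (10 + u ^ 2) * c *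
      Real.log (Real.log (10 + u ^ 2)) ^ (c - 1)) u := by
  have h1 : HasDerivAt (fun u : ℝ => 10 + u ^ 2) (2 * u) u := by
    simpa using (hasDerivAt_pow 2 u).const_add 10
  have h2 := h1.log (by positivity)
  have h3 := h2.log (by linarith [pa_two_lt u])
  exact h3.rpow_const (Or.inl (by linarith [pa_half_lt u]))

lemma pa_cont (c : ℝ) : Continuous (f c) := by
  have : Continuous (g c) :=
    continuous_iff_continuousAt.2 fun u => (pa_deriv c u).continuousAt
  unfold f
  fun_prop

lemma pa_F (c u : ℝ) : HasDerivAt (Fpot c) (f c u) u :=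
  intervalIntegral.integral_hasDerivAt_right ((pa_cont c).intervalIntegrable _ _)
    (pa_cont c).aestronglyMeasurable.stronglyMeasurableAtFilter (pa_cont c).continuousAt

lemma pa_bd (c : ℝ) (hc : 0 < c) (hc' : c < 8 / 225) (u : ℝ) (hu : 0 ≤ u) :
    ∃ d, HasDerivAt (g c) d u ∧ 0 ≤ d ∧ u * d ≤ 6 * g c u := by
  refine ⟨_, pa_deriv c u, ?_, ?_⟩
  · have := pa_two_lt u
    have := pa_half_lt u
    positivity
  · have hL := pa_two_lt u
    have hw := pa_half_lt u
    have hg : g c u = Real.log (Real.log (10 + u ^ 2)) ^ (c - 1) *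
        Real.log (Real.log (10 + u ^ 2)) := by
      rw [g, Real.rpow_sub_one (by linarith)]
      field_simp
    rw [hg]
    generalize Real.log (Real.log (10 + u ^ 2)) = w at *
    generalize Real.log (10 + u ^ 2) = L at *
    have hp : 0 ≤ w ^ (c - 1) := Real.rpow_nonneg (by linarith) _
    have h1 : u * (2 * u / (10 + u ^ 2) / L * c) ≤ 6 * w := by
      have e : u * (2 * u / (10 + u ^ 2) / L * c) = (2 * u ^ 2 / (10 + u ^ 2)) / L * c := by ring
      have a : 2 * u ^ 2 / (10 + u ^ 2) ≤ 2 := by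
        rw [div_le_iff₀ (by positivity)]; linarith
      have b : (2 * u ^ 2 / (10 + u ^ 2)) / L ≤ 1 := by
        rw [div_le_iff₀ (by linarith)]; linarith
      rw [e]
      nlinarith
    nlinarith

lemma pa_nonneg (c : ℝ) (hc : 0 < c) (hc' : c < 8 / 225) (u : ℝ) (hu : 0 ≤ u) :
    (1/12) * u ^ 6 * g c u ≤ Fpot c u ∧ Fpot c u ≤ (1/6) * u ^ 6 * g c u := by
  have hP (k x d : ℝ) (h : HasDerivAt (g c) d x) :
      HasDerivAt (fun x => k * x ^ 6 * g c x) (k * (6 * x ^ 5) * g c x + k * x ^ 6 * d) x := by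
    have h6 : HasDerivAt (fun x : ℝ => k * x ^ 6) (k * (6 * x ^ 5)) x := by
      simpa using (hasDerivAt_pow 6 x).const_mul k
    exact h6.mul h
  have key (H : ℝ → ℝ) (h0 : H 0 = 0)
      (hd : ∀ x, 0 ≤ x → ∃ d, HasDerivAt H d x ∧ 0 ≤ d) : 0 ≤ H u := by
    rw [← h0]
    refine monotoneOn_of_deriv_nonneg (convex_Ici (0:ℝ)) ?_ ?_ ?_ (by simp) hu hu
    · intro x hx
      obtain ⟨d, h, -⟩ := hd x hx
      exact h.continuousAt.continuousWithinAt
    · intro x hx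
      obtain ⟨d, h, -⟩ := hd x (interior_subset hx)
      exact h.differentiableAt.differentiableWithinAt
    · intro x hx
      obtain ⟨d, h, h'⟩ := hd x (interior_subset hx)
      rwa [h.deriv]
  constructor
  · have := key (fun x => Fpot c x - (1/12) * x ^ 6 * g c x) (by simp [Fpot]) (fun x hx => by
      obtain ⟨d, h, h0, h1⟩ := pa_bd c hc hc' x hx
      refine ⟨_, (pa_F c x).sub (hP _ x d h), ?_⟩
      have : 0 ≤ x ^ 5 * (6 * g c x - x * d) := mul_nonneg (by positivity) (by linarith)
      unfold f
      linarith)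
    simpa using this
  · have := key (fun x => (1/6) * x ^ 6 * g c x - Fpot c x) (by simp [Fpot]) (fun x hx => by
      obtain ⟨d, h, h0, h1⟩ := pa_bd c hc hc' x hx
      refine ⟨_, (hP _ x d h).sub (pa_F c x), ?_⟩
      have : 0 ≤ x ^ 6 * d := by positivity
      unfold f
      linarith)
    simpa using this

lemma pa_even (c u : ℝ) : Fpot c (-u) = Fpot c u := by
  have h : ∀ v, f c (-v) = - f c v := fun v => by simp only [f, g, neg_sq]; ring
  have := intervalIntegral.integral_comp_neg (a := 0) (b := u) (f c)
  simp only [h, intervalIntegral.integral_neg, neg_zero] at this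
  rw [Fpot, Fpot, intervalIntegral.integral_symm, ← this, neg_neg]

/-- Asymptotics of the nonlinear potential. -/
theorem potential_asymptotics (c : ℝ) (hc : 0 < c) (hc' : c < 8 / 225) (u : ℝ) :
    (1/12) * u ^ 6 * g c u ≤ Fpot c u ∧ Fpot c u ≤ (1/6) * u ^ 6 * g c u := by
  rcases le_total 0 u with hu | hu
  · exact pa_nonneg c hc hc' u hu
  · have h := pa_nonneg c hc hc' (-u) (by linarith)
    have e : g c (-u) = g c u := by simp [g]
    have e6 : (-u) ^ 6 = u ^ 6 := by ring
    rwa [pa_even, e, e6] at h
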